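/- For closed terms t0, t1 of the calculus λ_S, t0 ≈₂ t1 holds if and only if for all closed contexts C, C[t0] evaluates to a normal form iff C[t1] evaluates to a normal form. (That is, observing termination alone gives the same equivalence as distinguishing evaluation to values from evaluation to control-stuck terms.) -/

import Mathlib

namespace LambdaS

/-- Terms of the calculus λ_S: variables, λ-abstractions, applications,
the shift operator `S k.t`, and the reset delimiter `⟨t⟩`. -/
inductive Tm : Type
  | var : ℕ → Tm
  | lam : ℕ → Tm → Tm
  | app : Tm → Tm → Tm
  | shift : ℕ → Tm → Tm
  | reset : Tm → Tm
  deriving DecidableEq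

/-- A variable fresh for a finite set of variables. -/
def fresh (s : Finset ℕ) : ℕ := if h : s.Nonempty then s.max' h + 1 else 0

namespace Tm

/-- Free variables. -/
def fv : Tm → Finset ℕ
  | var x => {x}
  | lam x t => fv t \ {x}
  | app t u => fv t ∪ fv u
  | shift k t => fv t \ {k}
  | reset t => fv t

def size : Tm → ℕ
  | var _ => 1
  | lam _ t => size t + 1
  | app t u => size t + size u + 1
  | shift _ t => size t + 1
  | reset t => size t + 1

/-- Renaming of free occurrences of a variable (used for α-renaming with a
fresh target variable). -/
def rename : Tm → ℕ → ℕ → Tm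
  | var w, y, z => if w = y then var z else var w
  | lam w t, y, z => if w = y then lam w t else lam w (rename t y z)
  | app t u, y, z => app (rename t y z) (rename u y z)
  | shift w t, y, z => if w = y then shift w t else shift w (rename t y z)
  | reset t, y, z => reset (rename t y z)

theorem size_rename (t : Tm) (y z : ℕ) : size (rename t y z) = size t := by
  induction t generalizing y z with
  | var w => simp only [rename]; split <;> rfl
  | lam w t ih => simp only [rename]; split <;> simp [size, ih]
  | app t u iht ihu => simp [rename, size, iht, ihu]
  | shift w t ih => simp only [rename]; split <;> simp [size, ih]
  | reset t ih => simp [rename, size, ih]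

/-- Capture-avoiding substitution `t{v/x}` of `v` for the free occurrences of
`x` in `t`; bound variables are α-renamed when needed. -/
def subst : Tm → ℕ → Tm → Tm
  | var w, x, v => if w = x then v else var w
  | lam y t, x, v =>
      if y = x then lam y t
      else if y ∈ fv v then
        lam (fresh (fv v ∪ fv t ∪ {x}))
          (subst (rename t y (fresh (fv v ∪ fv t ∪ {x}))) x v)
      else lam y (subst t x v)
  | app t u, x, v => app (subst t x v) (subst u x v)
  | shift y t, x, v =>
      if y = x then shift y t
      else if y ∈ fv v then
        shift (fresh (fv v ∪ fv t ∪ {x}))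
          (subst (rename t y (fresh (fv v ∪ fv t ∪ {x}))) x v)
      else shift y (subst t x v)
  | reset t, x, v => reset (subst t x v)
termination_by t _ _ => size t
decreasing_by all_goals simp [size_rename, size] <;> omega

end Tm

/-- Values: variables and λ-abstractions. -/
inductive IsValue : Tm → Prop
  | var (x : ℕ) : IsValue (Tm.var x)
  | lam (x : ℕ) (t : Tm) : IsValue (Tm.lam x t)

/-- A term is closed if it has no free variables. -/
def Closed (t : Tm) : Prop := t.fv = ∅

/-- Pure evaluation contexts E ::= □ | v E | E t. -/
inductive ECtx : Type
  | hole : ECtx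
  | appR : (v : Tm) → IsValue v → ECtx → ECtx
  | appL : ECtx → Tm → ECtx

def ECtx.plug : ECtx → Tm → Tm
  | .hole, t => t
  | .appR v _ E, t => Tm.app v (E.plug t)
  | .appL E u, t => Tm.app (E.plug t) u

def ECtx.fv : ECtx → Finset ℕ
  | .hole => ∅
  | .appR v _ E => v.fv ∪ E.fv
  | .appL E u => E.fv ∪ u.fv

/-- Composition of pure contexts: `(E.comp E').plug t = E.plug (E'.plug t)`. -/
def ECtx.comp : ECtx → ECtx → ECtx
  | .hole, E' => E'
  | .appR v hv E, E' => .appR v hv (E.comp E')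
  | .appL E u, E' => .appL (E.comp E') u

/-- Evaluation contexts F ::= □ | v F | F t | ⟨F⟩. -/
inductive FCtx : Type
  | hole : FCtx
  | appR : (v : Tm) → IsValue v → FCtx → FCtx
  | appL : FCtx → Tm → FCtx
  | reset : FCtx → FCtx

def FCtx.plug : FCtx → Tm → Tm
  | .hole, t => t
  | .appR v _ F, t => Tm.app v (F.plug t)
  | .appL F u, t => Tm.app (F.plug t) u
  | .reset F, t => Tm.reset (F.plug t)

def FCtx.fv : FCtx → Finset ℕ
  | .hole => ∅
  | .appR v _ F => v.fv ∪ F.fv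
  | .appL F u => F.fv ∪ u.fv
  | .reset F => F.fv

/-- The function `λx.⟨E[x]⟩` representing the captured delimited context `E`,
where `x` is chosen fresh (in particular `x ∉ fv E`). -/
def contFun (E : ECtx) : Tm :=
  Tm.lam (fresh E.fv) (Tm.reset (E.plug (Tm.var (fresh E.fv))))

/-- Call-by-value reduction →_v of λ_S. -/
inductive Red : Tm → Tm → Prop
  | beta (F : FCtx) (x : ℕ) (t v : Tm) :
      IsValue v →
      Red (F.plug (Tm.app (Tm.lam x t) v)) (F.plug (t.subst x v))
  | capture (F : FCtx) (E : ECtx) (k : ℕ) (t : Tm) :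
      Red (F.plug (Tm.reset (E.plug (Tm.shift k t))))
          (F.plug (Tm.reset (t.subst k (contFun E))))
  | resetVal (F : FCtx) (v : Tm) :
      IsValue v →
      Red (F.plug (Tm.reset v)) (F.plug v)

/-- A stuck term: not a value and unable to reduce. -/
def Stuck (t : Tm) : Prop := ¬ IsValue t ∧ ∀ t', ¬ Red t t'

/-- Normal forms: values and stuck terms. -/
def NormalForm (t : Tm) : Prop := IsValue t ∨ Stuck t

/-- A control-stuck term has the form E[S k.t]. -/
def ControlStuck (t : Tm) : Prop :=
  ∃ (E : ECtx) (k : ℕ) (s : Tm), t = E.plug (Tm.shift k s)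

/-- Evaluation: `t ⇓ t'` iff `t →_v* t'` and `t'` is a normal form. -/
def Evals (t t' : Tm) : Prop := Relation.ReflTransGen Red t t' ∧ NormalForm t'

/-- `t` evaluates to some value. -/
def EvalsToValue (t : Tm) : Prop := ∃ v, Relation.ReflTransGen Red t v ∧ IsValue v

/-- `t` evaluates to some control-stuck term. -/
def EvalsToStuck (t : Tm) : Prop :=
  ∃ s, Relation.ReflTransGen Red t s ∧ ControlStuck s

/-- General contexts C ::= □ | λx.C | t C | C t | S k.C | ⟨C⟩. -/
inductive Ctx : Type
  | hole : Ctx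
  | lam : ℕ → Ctx → Ctx
  | appL : Ctx → Tm → Ctx
  | appR : Tm → Ctx → Ctx
  | shift : ℕ → Ctx → Ctx
  | reset : Ctx → Ctx

def Ctx.plug : Ctx → Tm → Tm
  | .hole, t => t
  | .lam x C, t => Tm.lam x (C.plug t)
  | .appL C u, t => Tm.app (C.plug t) u
  | .appR u C, t => Tm.app u (C.plug t)
  | .shift k C, t => Tm.shift k (C.plug t)
  | .reset C, t => Tm.reset (C.plug t)

def Ctx.fv : Ctx → Finset ℕ
  | .hole => ∅
  | .lam x C => C.fv \ {x}
  | .appL C u => C.fv ∪ u.fv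
  | .appR u C => u.fv ∪ C.fv
  | .shift k C => C.fv \ {k}
  | .reset C => C.fv

/-- Contextual equivalence ≈ for the relaxed semantics (on closed terms):
tests evaluation to values and evaluation to control-stuck terms in every
closed context. -/
def CtxEquiv (t0 t1 : Tm) : Prop :=
  ∀ C : Ctx, C.fv = ∅ →
    (EvalsToValue (C.plug t0) ↔ EvalsToValue (C.plug t1)) ∧
    (EvalsToStuck (C.plug t0) ↔ EvalsToStuck (C.plug t1))

/-- Contextual equivalence ≈_p for the original semantics: tests evaluation to
values of ⟨C[·]⟩ in every closed context C. -/
def CtxEquivP (t0 t1 : Tm) : Prop :=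
  ∀ C : Ctx, C.fv = ∅ →
    (EvalsToValue (Tm.reset (C.plug t0)) ↔ EvalsToValue (Tm.reset (C.plug t1)))

/-- Contextual equivalence ≈_E testing only with closed evaluation contexts. -/
def ECtxEquiv (t0 t1 : Tm) : Prop :=
  ∀ F : FCtx, F.fv = ∅ →
    (EvalsToValue (F.plug t0) ↔ EvalsToValue (F.plug t1)) ∧
    (EvalsToStuck (F.plug t0) ↔ EvalsToStuck (F.plug t1))

/-- Applicative simulation. -/
def IsAppSim (R : Tm → Tm → Prop) : Prop :=
  ∀ t0 t1, R t0 t1 →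
    (∀ t0', Red t0 t0' →
      ∃ t1', Relation.ReflTransGen Red t1 t1' ∧ R t0' t1') ∧
    (∀ x t0', t0 = Tm.lam x t0' →
      ∃ t1', Relation.ReflTransGen Red t1 (Tm.lam x t1') ∧
        ∀ v, IsValue v → Closed v → R (t0'.subst x v) (t1'.subst x v)) ∧
    (∀ (E0 : ECtx) (k : ℕ) (t0' : Tm), t0 = E0.plug (Tm.shift k t0') →
      ∃ (E1 : ECtx) (t1' : Tm),
        Relation.ReflTransGen Red t1 (E1.plug (Tm.shift k t1')) ∧
        ∀ E : ECtx, E.fv = ∅ →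
          R (Tm.reset (t0'.subst k (contFun (E.comp E0))))
            (Tm.reset (t1'.subst k (contFun (E.comp E1)))))

/-- Applicative bisimulation. -/
def IsAppBisim (R : Tm → Tm → Prop) : Prop :=
  IsAppSim R ∧ IsAppSim (fun a b => R b a)

/-- Applicative bisimilarity ≈_app: the largest applicative bisimulation. -/
def AppBisim (t0 t1 : Tm) : Prop := ∃ R, IsAppBisim R ∧ R t0 t1

/-- Simultaneous substitution (used only with closing substitutions mapping
variables to closed values, so no capture can occur). -/
def Tm.msubst : Tm → (ℕ → Tm) → Tm
  | .var x, σ => σ x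
  | .lam x t, σ => Tm.lam x (t.msubst (Function.update σ x (Tm.var x)))
  | .app t u, σ => Tm.app (t.msubst σ) (u.msubst σ)
  | .shift k t, σ => Tm.shift k (t.msubst (Function.update σ k (Tm.var k)))
  | .reset t, σ => Tm.reset (t.msubst σ)

/-- Open extension of a relation on closed terms: relate `t0σ` and `t1σ` for
every substitution σ mapping variables to closed values. -/
def OpenExt (R : Tm → Tm → Prop) (t0 t1 : Tm) : Prop :=
  ∀ σ : ℕ → Tm, (∀ x, IsValue (σ x) ∧ Closed (σ x)) →
    R (t0.msubst σ) (t1.msubst σ)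

/-- ω := λx.x x. -/
def omegaTm : Tm := Tm.lam 0 (Tm.app (Tm.var 0) (Tm.var 0))

/-- Ω := ω ω, a diverging term. -/
def OmegaTm : Tm := Tm.app omegaTm omegaTm

/-!
On a closed term, `→_v` can only get stuck at a value or at a control-stuck term, so terminating
means evaluating to one or the other. The two are told apart by the context `(λx.Ω) □`: a value is
consumed and leaves `Ω`, whereas a control-stuck `E[S k.t]` stays control-stuck inside the larger
pure context `(λx.Ω) E`. As reduction is deterministic, evaluation to a value of `t` thus amounts
to termination of `t` and divergence of `(λx.Ω) t`.
-/

theorem Tm.fv_rename_subset (t : Tm) (y z : ℕ) : (t.rename y z).fv ⊆ t.fv \ {y} ∪ {z} := by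
  induction t <;> grind [Tm.rename, Tm.fv]

theorem Tm.fv_subst_subset (t : Tm) (x : ℕ) (v : Tm) : (t.subst x v).fv ⊆ t.fv \ {x} ∪ v.fv := by
  fun_induction Tm.subst t x v <;> grind [Tm.fv, Tm.fv_rename_subset]

theorem ECtx.fv_plug (E : ECtx) (t : Tm) : (E.plug t).fv = E.fv ∪ t.fv := by
  induction E <;> grind [ECtx.plug, ECtx.fv, Tm.fv]

theorem FCtx.fv_plug (F : FCtx) (t : Tm) : (F.plug t).fv = F.fv ∪ t.fv := by
  induction F <;> grind [FCtx.plug, FCtx.fv, Tm.fv]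

theorem Ctx.fv_plug_subset (C : Ctx) (t : Tm) : (C.plug t).fv ⊆ C.fv ∪ t.fv := by
  induction C <;> grind [Ctx.plug, Ctx.fv, Tm.fv]

theorem Closed.plug {t : Tm} (ht : Closed t) {C : Ctx} (hC : C.fv = ∅) : Closed (C.plug t) :=
  Finset.subset_empty.1 ((C.fv_plug_subset t).trans (Finset.union_subset hC.subset ht.subset))

theorem fv_contFun_subset (E : ECtx) : (contFun E).fv ⊆ E.fv := by
  grind [contFun, Tm.fv, ECtx.fv_plug]

/-- Contraction of a redex at the root; `→_v` is its closure under evaluation contexts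
(`red_iff`). -/
inductive Contract : Tm → Tm → Prop
  | beta (x : ℕ) (t : Tm) {v : Tm} (hv : IsValue v) : Contract (.app (.lam x t) v) (t.subst x v)
  | capture (E : ECtx) (k : ℕ) (t : Tm) :
      Contract (.reset (E.plug (.shift k t))) (.reset (t.subst k (contFun E)))
  | resetVal {v : Tm} (hv : IsValue v) : Contract (.reset v) v

theorem red_iff {t t' : Tm} :
    Red t t' ↔ ∃ (F : FCtx) (r r' : Tm), Contract r r' ∧ t = F.plug r ∧ t' = F.plug r' := by
  constructor
  · rintro (⟨F, x, t, v, hv⟩ | ⟨F, E, k, t⟩ | ⟨F, v, hv⟩)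
    · exact ⟨F, _, _, .beta x t hv, rfl, rfl⟩
    · exact ⟨F, _, _, .capture E k t, rfl, rfl⟩
    · exact ⟨F, _, _, .resetVal hv, rfl, rfl⟩
  · rintro ⟨F, r, r', ⟨x, t, hv⟩ | ⟨E, k, t⟩ | hv, rfl, rfl⟩
    · exact .beta F x t _ hv
    · exact .capture F E k t
    · exact .resetVal F _ hv

theorem Contract.red_plug {r r' : Tm} (h : Contract r r') (F : FCtx) :
    Red (F.plug r) (F.plug r') :=
  red_iff.2 ⟨F, r, r', h, rfl, rfl⟩

theorem Contract.red {r r' : Tm} (h : Contract r r') : Red r r' :=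
  h.red_plug .hole

theorem Contract.fv_subset {r r' : Tm} (h : Contract r r') : r'.fv ⊆ r.fv := by
  cases h with
  | beta x t hv => exact t.fv_subst_subset x _
  | capture E k t =>
    have ht := t.fv_subst_subset k (contFun E)
    grind [Tm.fv, ECtx.fv_plug, fv_contFun_subset]
  | resetVal hv => rfl

theorem Red.fv_subset {t t' : Tm} (h : Red t t') : t'.fv ⊆ t.fv := by
  obtain ⟨F, r, r', hr, rfl, rfl⟩ := red_iff.1 h
  rw [F.fv_plug, F.fv_plug]
  exact Finset.union_subset_union_right hr.fv_subset

theorem Closed.of_reds {t t' : Tm} (ht : Closed t) (h : Relation.ReflTransGen Red t t') :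
    Closed t' := by
  induction h with
  | refl => exact ht
  | tail _ hred ih => exact Finset.subset_empty.1 (hred.fv_subset.trans ih.subset)

/-- Composition of evaluation contexts, `(F.comp F')[t] = F[F'[t]]`. -/
def FCtx.comp : FCtx → FCtx → FCtx
  | .hole, F' => F'
  | .appR v hv F, F' => .appR v hv (F.comp F')
  | .appL F u, F' => .appL (F.comp F') u
  | .reset F, F' => .reset (F.comp F')

theorem FCtx.plug_comp (F F' : FCtx) (t : Tm) : (F.comp F').plug t = F.plug (F'.plug t) := by
  induction F <;> simp_all [FCtx.comp, FCtx.plug]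

theorem Red.plug {t t' : Tm} (h : Red t t') (F : FCtx) : Red (F.plug t) (F.plug t') := by
  obtain ⟨F', r, r', hr, rfl, rfl⟩ := red_iff.1 h
  simpa only [FCtx.plug_comp] using hr.red_plug (F.comp F')

theorem red_app_iff {t u s : Tm} :
    Red (.app t u) s ↔
      (∃ x b, t = .lam x b ∧ IsValue u ∧ s = b.subst x u) ∨
      (IsValue t ∧ ∃ u', Red u u' ∧ s = .app t u') ∨
      (∃ t', Red t t' ∧ s = .app t' u) := by
  constructor
  · intro h
    obtain ⟨F, r, r', hr, heq, rfl⟩ := red_iff.1 h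
    cases F with
    | hole =>
      cases hr <;> cases heq
      exact .inl ⟨_, _, rfl, ‹_›, rfl⟩
    | appR v hv F =>
      cases heq
      exact .inr (.inl ⟨hv, _, hr.red_plug F, rfl⟩)
    | appL F w =>
      cases heq
      exact .inr (.inr ⟨_, hr.red_plug F, rfl⟩)
    | reset F => cases heq
  · rintro (⟨x, b, rfl, hu, rfl⟩ | ⟨ht, u', hu, rfl⟩ | ⟨t', ht, rfl⟩)
    · exact (Contract.beta x b hu).red
    · exact hu.plug (.appR t ht .hole)
    · exact ht.plug (.appL .hole u)

theorem red_reset_iff {t s : Tm} :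
    Red (.reset t) s ↔
      (IsValue t ∧ s = t) ∨
      (∃ E k b, t = ECtx.plug E (.shift k b) ∧ s = .reset (b.subst k (contFun E))) ∨
      (∃ t', Red t t' ∧ s = .reset t') := by
  constructor
  · intro h
    obtain ⟨F, r, r', hr, heq, rfl⟩ := red_iff.1 h
    cases F with
    | hole =>
      cases hr <;> cases heq
      · exact .inr (.inl ⟨_, _, _, rfl, rfl⟩)
      · exact .inl ⟨‹_›, rfl⟩
    | appR v hv F => cases heq
    | appL F w => cases heq
    | reset F =>
      cases heq
      exact .inr (.inr ⟨_, hr.red_plug F, rfl⟩)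
  · rintro (⟨ht, rfl⟩ | ⟨E, k, b, rfl, rfl⟩ | ⟨t', ht, rfl⟩)
    · exact (Contract.resetVal ht).red
    · exact (Contract.capture E k b).red
    · exact ht.plug (.reset .hole)

theorem Contract.not_isValue {r r' : Tm} (h : Contract r r') : ¬ IsValue r := by
  cases h <;> nofun

theorem IsValue.not_red {v : Tm} (hv : IsValue v) (t : Tm) : ¬ Red v t := by
  intro h
  obtain ⟨F, r, r', hr, rfl, rfl⟩ := red_iff.1 h
  cases F with
  | hole => exact hr.not_isValue hv
  | appR | appL | reset => cases hv

theorem ControlStuck.not_isValue {t : Tm} (h : ControlStuck t) : ¬ IsValue t := by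
  obtain ⟨E, k, s, rfl⟩ := h
  cases E <;> nofun

theorem not_red_shift (k : ℕ) (s t : Tm) : ¬ Red (.shift k s) t := by
  intro h
  obtain ⟨F, r, r', hr, heq, rfl⟩ := red_iff.1 h
  cases F <;> cases heq
  cases hr

theorem ControlStuck.not_red {t : Tm} (h : ControlStuck t) (t' : Tm) : ¬ Red t t' := by
  obtain ⟨E, k, s, rfl⟩ := h
  have not_value (E : ECtx) : ¬ IsValue (E.plug (.shift k s)) :=
    ControlStuck.not_isValue ⟨E, k, s, rfl⟩
  induction E generalizing t' with
  | hole => exact not_red_shift k s t'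
  | appR v hv E ih =>
    rw [ECtx.plug, red_app_iff]
    rintro (⟨x, b, rfl, hE, -⟩ | ⟨-, u', hred, -⟩ | ⟨v', hred, -⟩)
    · exact not_value E hE
    · exact ih u' hred
    · exact hv.not_red v' hred
  | appL E u ih =>
    rw [ECtx.plug, red_app_iff]
    rintro (⟨x, b, hE, -, -⟩ | ⟨hE, -⟩ | ⟨t', hred, -⟩)
    · exact not_value E (hE ▸ .lam x b)
    · exact not_value E hE
    · exact ih t' hred

theorem ECtx.plug_shift_injective {E E' : ECtx} {k k' : ℕ} {s s' : Tm}
    (h : E.plug (.shift k s) = E'.plug (.shift k' s')) : E = E' ∧ k = k' ∧ s = s' := by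
  have not_value (E : ECtx) (k : ℕ) (s : Tm) : ¬ IsValue (E.plug (.shift k s)) :=
    ControlStuck.not_isValue ⟨E, k, s, rfl⟩
  induction E generalizing E' <;> cases E' <;> grind [ECtx.plug]

-- The alternatives of `red_app_iff`, and those of `red_reset_iff`, exclude one another because
-- values, control-stuck terms and reducible terms are pairwise disjoint.
theorem red_rightUnique : Relator.RightUnique Red := by
  intro t
  induction t with
  | var x => exact fun _ _ h => absurd h (IsValue.not_red (.var x) _)
  | lam x t => exact fun _ _ h => absurd h (IsValue.not_red (.lam x t) _)
  | shift k t => exact fun _ _ h => absurd h (not_red_shift k t _)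
  | app t u iht ihu =>
    intro s s' h h'
    rw [red_app_iff] at h h'
    grind [IsValue.not_red, IsValue.lam]
  | reset t ih =>
    intro s s' h h'
    rw [red_reset_iff] at h h'
    grind [IsValue.not_red, ControlStuck.not_red, ControlStuck.not_isValue, ControlStuck,
      ECtx.plug_shift_injective]

theorem isValue_or_controlStuck_or_red {t : Tm} (ht : Closed t) :
    IsValue t ∨ ControlStuck t ∨ ∃ t', Red t t' := by
  induction t with
  | var x => exact .inl (.var x)
  | lam x t => exact .inl (.lam x t)
  | shift k t => exact .inr (.inl ⟨.hole, k, t, rfl⟩)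
  | reset t ih =>
    simp only [red_reset_iff]
    rcases ih ht with hv | ⟨E, k, s, rfl⟩ | ⟨t', h⟩
    · exact .inr (.inr ⟨t, .inl ⟨hv, rfl⟩⟩)
    · exact .inr (.inr ⟨_, .inr (.inl ⟨E, k, s, rfl, rfl⟩)⟩)
    · exact .inr (.inr ⟨_, .inr (.inr ⟨t', h, rfl⟩)⟩)
  | app t u iht ihu =>
    obtain ⟨htc, huc⟩ : Closed t ∧ Closed u := Finset.union_eq_empty.1 ht
    rcases iht htc with hv | ⟨E, k, s, rfl⟩ | ⟨t', h⟩
    · rcases ihu huc with hu | ⟨E, k, s, rfl⟩ | ⟨u', h⟩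
      · cases hv with
        | var x => simp [Closed, Tm.fv] at htc
        | lam x b => exact .inr (.inr ⟨_, (Contract.beta x b hu).red⟩)
      · exact .inr (.inl ⟨.appR t hv E, k, s, rfl⟩)
      · exact .inr (.inr ⟨_, h.plug (.appR t hv .hole)⟩)
    · exact .inr (.inl ⟨.appL E u, k, s, rfl⟩)
    · exact .inr (.inr ⟨_, h.plug (.appL .hole u)⟩)

theorem NormalForm.not_red {t : Tm} (h : NormalForm t) (t' : Tm) : ¬ Red t t' :=
  h.elim (fun hv => hv.not_red t') (fun hs => hs.2 t')

theorem ControlStuck.normalForm {t : Tm} (h : ControlStuck t) : NormalForm t :=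
  .inr ⟨h.not_isValue, h.not_red⟩

theorem Closed.normalForm_iff {t : Tm} (ht : Closed t) :
    NormalForm t ↔ IsValue t ∨ ControlStuck t := by
  refine ⟨fun h => ?_, Or.rec .inl ControlStuck.normalForm⟩
  rcases isValue_or_controlStuck_or_red ht with hv | hs | ⟨t', hred⟩
  · exact .inl hv
  · exact .inr hs
  · exact absurd hred (h.not_red t')

/-- Termination `t ⇓`: evaluation to some normal form. -/
def Terminates (t : Tm) : Prop := ∃ t', Evals t t'

theorem Closed.terminates_iff {t : Tm} (ht : Closed t) :
    Terminates t ↔ EvalsToValue t ∨ EvalsToStuck t := by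
  unfold EvalsToValue EvalsToStuck
  rw [← exists_or]
  refine exists_congr fun t' => ?_
  rw [Evals, ← and_or_left]
  exact and_congr_right fun h => (ht.of_reds h).normalForm_iff

theorem Terminates.of_reds {t t' : Tm} (ht : Terminates t) (h : Relation.ReflTransGen Red t t') :
    Terminates t' := by
  obtain ⟨n, htn, hn⟩ := ht
  rcases Relation.ReflTransGen.total_of_right_unique red_rightUnique h htn with h' | h'
  · exact ⟨n, h', hn⟩
  · rcases h'.cases_head with rfl | ⟨s, hs, -⟩
    · exact ⟨n, .refl, hn⟩
    · exact absurd hs (hn.not_red s)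

theorem red_OmegaTm_self : Red OmegaTm OmegaTm := by
  have self_app : (Tm.app (.var 0) (.var 0)).subst 0 omegaTm = OmegaTm := by
    simp [Tm.subst, OmegaTm]
  exact self_app.subst (motive := Red OmegaTm) (Contract.beta 0 _ (.lam _ _)).red

theorem not_terminates_OmegaTm : ¬ Terminates OmegaTm := by
  rintro ⟨t, hred, ht⟩
  have eq_OmegaTm : t = OmegaTm := by
    clear ht
    induction hred with
    | refl => rfl
    | tail _ hs ih => exact red_rightUnique (ih ▸ hs) red_OmegaTm_self
  exact ht.not_red OmegaTm (eq_OmegaTm ▸ red_OmegaTm_self)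

/-- The function `λx.Ω`, which separates values from control-stuck arguments: it diverges on the
former and is never applied to the latter. -/
def constOmegaTm : Tm := .lam 0 OmegaTm

theorem fv_constOmegaTm : constOmegaTm.fv = ∅ := rfl

theorem isValue_constOmegaTm : IsValue constOmegaTm := .lam 0 OmegaTm

theorem reds_app_constOmegaTm {t t' : Tm} (h : Relation.ReflTransGen Red t t') :
    Relation.ReflTransGen Red (.app constOmegaTm t) (.app constOmegaTm t') :=
  h.lift (Tm.app constOmegaTm) fun _ _ hred => hred.plug (.appR _ isValue_constOmegaTm .hole)

theorem EvalsToValue.not_terminates_app_constOmegaTm {t : Tm} (h : EvalsToValue t) :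
    ¬ Terminates (.app constOmegaTm t) := by
  obtain ⟨v, htv, hv⟩ := h
  have subst_eq : OmegaTm.subst 0 v = OmegaTm := by simp [Tm.subst, OmegaTm, omegaTm]
  have discard : Red (.app constOmegaTm v) OmegaTm :=
    subst_eq.subst (Contract.beta 0 OmegaTm hv).red
  exact fun ht => not_terminates_OmegaTm (ht.of_reds ((reds_app_constOmegaTm htv).tail discard))

theorem EvalsToStuck.terminates_app_constOmegaTm {t : Tm} (h : EvalsToStuck t) :
    Terminates (.app constOmegaTm t) := by
  obtain ⟨_, hred, E, k, s, rfl⟩ := h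
  have stuck : ControlStuck (.app constOmegaTm (E.plug (.shift k s))) :=
    ⟨.appR _ isValue_constOmegaTm E, k, s, rfl⟩
  exact ⟨_, reds_app_constOmegaTm hred, stuck.normalForm⟩

theorem Closed.evalsToValue_iff {t : Tm} (ht : Closed t) :
    EvalsToValue t ↔ Terminates t ∧ ¬ Terminates (.app constOmegaTm t) := by
  rw [ht.terminates_iff]
  have := @EvalsToValue.not_terminates_app_constOmegaTm t
  have := @EvalsToStuck.terminates_app_constOmegaTm t
  tauto

theorem Closed.evalsToStuck_iff {t : Tm} (ht : Closed t) :
    EvalsToStuck t ↔ Terminates t ∧ Terminates (.app constOmegaTm t) := by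
  rw [ht.terminates_iff]
  have := @EvalsToValue.not_terminates_app_constOmegaTm t
  have := @EvalsToStuck.terminates_app_constOmegaTm t
  tauto

/-- For closed terms, contextual equivalence ≈₂ (testing
evaluation to values and to control-stuck terms separately) coincides with
observing, in every closed context, mere evaluation to some normal form. -/
theorem ctxEquiv_iff_termination (t0 t1 : Tm) (h0 : Closed t0) (h1 : Closed t1) :
    CtxEquiv t0 t1 ↔
      (∀ C : Ctx, C.fv = ∅ →
        ((∃ t', Evals (C.plug t0) t') ↔ (∃ t', Evals (C.plug t1) t'))) := by
  change CtxEquiv t0 t1 ↔ ∀ C : Ctx, C.fv = ∅ → (Terminates (C.plug t0) ↔ Terminates (C.plug t1))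
  constructor
  · intro h C hC
    rw [(h0.plug hC).terminates_iff, (h1.plug hC).terminates_iff, (h C hC).1, (h C hC).2]
  · intro h C hC
    have hΩ : Terminates (.app constOmegaTm (C.plug t0)) ↔
        Terminates (.app constOmegaTm (C.plug t1)) :=
      h (.appR constOmegaTm C) (by rw [Ctx.fv, fv_constOmegaTm, hC, Finset.empty_union])
    rw [(h0.plug hC).evalsToValue_iff, (h1.plug hC).evalsToValue_iff,
      (h0.plug hC).evalsToStuck_iff, (h1.plug hC).evalsToStuck_iff, h C hC, hΩ]
    exact ⟨Iff.rfl, Iff.rfl⟩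

end LambdaS
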